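/- Let p be a positive integer and q1 > q2 > q3 > q4 ≥ 1 be integers with gcd(p, q_i) = 1 for i = 1,2,3,4. If the four rational Beatty sequences S(p/q_i, β_i), i = 1,2,3,4, form a disjoint covering system of the integers, then q1 = 2·q2. -/

import Mathlib

/-- The Beatty sequence `S(α, β) = {⌊α n + β⌋ : n ∈ ℤ}`. -/
def beattySet (α β : ℝ) : Set ℤ :=
  {m : ℤ | ∃ n : ℤ, m = ⌊α * n + β⌋}

/-!
Modulo `p`, the sequence `S(p/q, β)` is an arithmetic progression of length `q` and difference
`-q⁻¹`, so a disjoint cover has `∑ qᵢ = p`. At a frequency `k ≠ 0` the Fourier coefficient of this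
progression has absolute value `|sin (π k / p)| / |sin (π k q⁻¹ / p)|`, where `q⁻¹` is taken
modulo `p`, and the coefficients of the members of the cover add up to zero. Taking `k = qᵢ` yields
`1 / sin (π / p) ≤ ∑_{j ≠ i} 1 / sin (π nⱼ / p)`, where `±nⱼ` is the least absolute residue of
`qᵢ / qⱼ`. The three `nⱼ` are distinct and at least `2`, and the inequality fails if all of them are
at least `3`. Hence every `qᵢ` is `±2 qⱼ` modulo `p` for some `j ≠ i`. As `∑ qᵢ = p`, these
congruences are linear equations in the `qᵢ`, and their only solutions have `q₁ = 2 q₂`.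
-/

open Finset Real

section Residues

/-- The residues modulo `p` of a Beatty sequence of modulus `p / q`, for `q` coprime to `p`: an
arithmetic progression of length `q` and common difference `-q⁻¹`. The sequence `S(p/q, β)`
corresponds to `b = ⌊q * β⌋`. -/
def beattyResidues (p q : ℕ) (b : ZMod p) : Finset (ZMod p) :=
  (range q).image fun j : ℕ => (q : ZMod p)⁻¹ * (b - j)

variable {p q : ℕ}

lemma mem_beattyResidues_iff (hqp : q.Coprime p) {b m : ZMod p} :
    m ∈ beattyResidues p q b ↔ ∃ j < q, (q : ZMod p) * m = b - j := by
  have hinv : (q : ZMod p) * (q : ZMod p)⁻¹ = 1 := ZMod.coe_mul_inv_eq_one q hqp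
  simp only [beattyResidues, mem_image, mem_range]
  refine exists_congr fun j => and_congr_right fun _ => ⟨?_, fun hm => ?_⟩
  · rintro rfl
    linear_combination (b - j) * hinv
  · linear_combination m * hinv - (q : ZMod p)⁻¹ * hm

lemma mem_beattySet_div_iff (hq : 0 < q) {β : ℝ} {m : ℤ} :
    m ∈ beattySet ((p : ℝ) / q) β ↔
      ∃ n : ℤ, q * m ≤ p * n + ⌊q * β⌋ ∧ p * n + ⌊q * β⌋ < q * m + q := by
  have hq' : (0 : ℝ) < q := by exact_mod_cast hq
  refine exists_congr fun n => ?_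
  have hscale : (p : ℝ) / q * n + β = (((p * n : ℤ) : ℝ) + q * β) / q := by
    push_cast
    field_simp
  rw [← Int.floor_intCast_add, Int.le_floor, Int.floor_lt, eq_comm, Int.floor_eq_iff, hscale,
    le_div_iff₀ hq', div_lt_iff₀ hq']
  push_cast
  rw [add_one_mul, mul_comm (m : ℝ)]

lemma mem_beattySet_div_iff_intCast_mem_beattyResidues (hq : 0 < q) (hqp : q.Coprime p)
    {β : ℝ} {m : ℤ} :
    m ∈ beattySet ((p : ℝ) / q) β ↔ (m : ZMod p) ∈ beattyResidues p q ⌊q * β⌋ := by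
  rw [mem_beattySet_div_iff hq, mem_beattyResidues_iff hqp]
  constructor
  · rintro ⟨n, hlower, hupper⟩
    obtain ⟨j, hj⟩ := Int.eq_ofNat_of_zero_le (sub_nonneg.2 hlower)
    refine ⟨j, by lia, ?_⟩
    have hcast := congrArg (Int.cast : ℤ → ZMod p) hj
    push_cast [ZMod.natCast_self] at hcast
    linear_combination -hcast
  · rintro ⟨j, hj, hm⟩
    have hdvd : (p : ℤ) ∣ q * m - (⌊q * β⌋ - j) := by
      rw [← ZMod.intCast_eq_intCast_iff_dvd_sub]
      push_cast
      exact hm.symm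
    obtain ⟨n, hn⟩ := hdvd
    exact ⟨n, by lia, by lia⟩

lemma beattyResidues_nonempty (hq : 0 < q) (b : ZMod p) : (beattyResidues p q b).Nonempty :=
  (nonempty_range_iff.2 hq.ne').image _

lemma mem_beattyResidues_of_le [NeZero p] (hqp : q.Coprime p) (hpq : p ≤ q) (b m : ZMod p) :
    m ∈ beattyResidues p q b := by
  refine (mem_beattyResidues_iff hqp).2 ⟨(b - q * m).val, (ZMod.val_lt _).trans_le hpq, ?_⟩
  rw [ZMod.natCast_zmod_val, sub_sub_cancel]

lemma sum_beattyResidues {M : Type*} [AddCommMonoid M] (hqp : q.Coprime p) (hle : q ≤ p)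
    (b : ZMod p) (f : ZMod p → M) :
    ∑ m ∈ beattyResidues p q b, f m = ∑ j ∈ range q, f ((q : ZMod p)⁻¹ * (b - j)) := by
  refine sum_image fun i hi j hj hij => ?_
  have hinv : (q : ZMod p) * (q : ZMod p)⁻¹ = 1 := ZMod.coe_mul_inv_eq_one q hqp
  have hcast : (i : ZMod p) = j := by linear_combination (j - i : ZMod p) * hinv - q * hij
  have hval := congrArg ZMod.val hcast
  rwa [ZMod.val_cast_of_lt ((mem_range.1 hi).trans_le hle),
    ZMod.val_cast_of_lt ((mem_range.1 hj).trans_le hle)] at hval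

lemma card_beattyResidues (hqp : q.Coprime p) (hle : q ≤ p) (b : ZMod p) :
    #(beattyResidues p q b) = q := by
  rw [card_eq_sum_ones, sum_beattyResidues hqp hle, sum_const, card_range, smul_eq_mul, mul_one]

end Residues

section Chord

variable {p : ℕ} [NeZero p]

/-- The distance from `1` to the `p`-th root of unity `exp (2πi t / p)`. -/
noncomputable def chord (t : ZMod p) : ℝ := ‖(ZMod.stdAddChar t : ℂ) - 1‖

lemma chord_eq_two_mul_sin (t : ZMod p) :
    chord t = 2 * sin (t.valMinAbs.natAbs * (π / p)) := by
  have hp : (0 : ℝ) < p := by exact_mod_cast Nat.pos_of_neZero p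
  set v : ℤ := t.valMinAbs with hv
  have habs : |(v : ℝ) * (π / p)| = v.natAbs * (π / p) := by
    rw [abs_mul, abs_of_pos (div_pos pi_pos hp), Nat.cast_natAbs, Int.cast_abs]
  have hle_pi : |(v : ℝ) * (π / p)| ≤ π := by
    have hnat : (v.natAbs : ℝ) ≤ p :=
      Nat.cast_le.2 ((ZMod.natAbs_valMinAbs_le t).trans (Nat.div_le_self p 2))
    rw [habs, ← mul_div_assoc, div_le_iff₀ hp, mul_comm]
    gcongr
  have hexp : (ZMod.stdAddChar t : ℂ) = Complex.exp (Complex.I * (2 * (v * (π / p)) : ℝ)) := by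
    rw [← ZMod.coe_valMinAbs t, ZMod.stdAddChar_coe, hv]
    push_cast
    ring_nf
  rw [chord, hexp, Complex.norm_exp_I_mul_ofReal_sub_one, mul_div_cancel_left₀ _ two_ne_zero,
    norm_mul, Real.norm_two, Real.norm_eq_abs, abs_sin_eq_sin_abs_of_abs_le_pi hle_pi, habs]

lemma chord_neg (t : ZMod p) : chord (-t) = chord t := by
  rw [chord_eq_two_mul_sin, chord_eq_two_mul_sin, ZMod.natAbs_valMinAbs_neg]

lemma chord_pos {t : ZMod p} (ht : t ≠ 0) : 0 < chord t := by
  rw [chord, norm_pos_iff, sub_ne_zero, ← AddChar.map_zero_eq_one (ZMod.stdAddChar (N := p))]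
  exact ZMod.injective_stdAddChar.ne ht

lemma norm_sum_beattyResidues_mul_chord {q : ℕ} (hqp : q.Coprime p) (hle : q ≤ p)
    (b k : ZMod p) :
    ‖∑ m ∈ beattyResidues p q b, (ZMod.stdAddChar (k * m) : ℂ)‖ * chord (k * (q : ZMod p)⁻¹)
      = chord k := by
  have hinv : (q : ZMod p) * (q : ZMod p)⁻¹ = 1 := ZMod.coe_mul_inv_eq_one q hqp
  set t : ZMod p := k * (q : ZMod p)⁻¹ with ht
  have hterm (j : ℕ) : (ZMod.stdAddChar (k * ((q : ZMod p)⁻¹ * (b - (j : ZMod p)))) : ℂ)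
      = ZMod.stdAddChar (t * b) * ZMod.stdAddChar (-t) ^ j := by
    rw [← AddChar.map_nsmul_eq_pow, ← AddChar.map_add_eq_mul, nsmul_eq_mul, ht]
    ring_nf
  have hmul : q • (-t) = -k := by
    rw [nsmul_eq_mul]
    linear_combination (-k) * hinv
  rw [sum_beattyResidues hqp hle, sum_congr rfl fun j _ => hterm j, ← mul_sum, norm_mul,
    AddChar.norm_apply, one_mul, ← chord_neg t, chord, ← norm_mul, geom_sum_mul,
    ← AddChar.map_nsmul_eq_pow, hmul, ← chord, chord_neg]

end Chord

section Trigonometry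

lemma eight_thirds_mul_sin_lt_sin_three_mul {x : ℝ} (hx0 : 0 < x) (hx : x < 2 / 7) :
    8 / 3 * sin x < sin (3 * x) := by
  have hsin_pos : 0 < sin x := sin_pos_of_pos_of_lt_pi hx0 (by linarith [pi_gt_three])
  have hsin_sq : sin x ^ 2 < 4 / 49 := by nlinarith [sin_lt hx0]
  rw [sin_three_mul]
  nlinarith

lemma sixteen_fifths_mul_sin_lt_sin_four_mul {x : ℝ} (hx0 : 0 < x) (hx : x < 2 / 7) :
    16 / 5 * sin x < sin (4 * x) := by
  have hsin_pos : 0 < sin x := sin_pos_of_pos_of_lt_pi hx0 (by linarith [pi_gt_three])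
  have hcos : 47 / 49 < cos x := by nlinarith [one_sub_sq_div_two_le_cos (x := x)]
  have hcos_two : 41 / 49 < cos (2 * x) := by
    nlinarith [one_sub_sq_div_two_le_cos (x := 2 * x)]
  have hsin_four : sin (4 * x) = 4 * (cos x * cos (2 * x)) * sin x := by
    rw [show 4 * x = 2 * (2 * x) by ring, sin_two_mul, sin_two_mul]
    ring
  rw [hsin_four]
  gcongr
  nlinarith

variable {p : ℕ}

lemma sin_natCast_mul_pi_div_le {m n : ℕ} (hmn : m ≤ n) (hn : 2 * n ≤ p) :
    sin (m * (π / p)) ≤ sin (n * (π / p)) := by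
  have hn' : 2 * (n : ℝ) ≤ p := by exact_mod_cast hn
  refine sin_le_sin_of_le_of_le_pi_div_two ?_ ?_ (by gcongr)
  · exact (neg_nonpos.2 (by positivity)).trans (by positivity : (0 : ℝ) ≤ m * (π / p))
  · calc (n : ℝ) * (π / p) = 2 * n / p * (π / 2) := by ring
      _ ≤ 1 * (π / 2) := by
        gcongr
        exact div_le_one_of_le₀ hn' (Nat.cast_nonneg p)
      _ = π / 2 := one_mul _

-- The bounds `3/8`, `5/16` and `5/16` for the three smallest admissible `n` add up to `1`.
lemma inv_sin_natCast_mul_lt (hp : 11 ≤ p) {n : ℕ} (hn3 : 3 ≤ n) (hn : 2 * n ≤ p) :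
    (sin (n * (π / p)))⁻¹ < (5 / 16 + if n = 3 then 1 / 16 else 0) * (sin (π / p))⁻¹ := by
  have hp11 : (11 : ℝ) ≤ p := by exact_mod_cast hp
  have hx0 : 0 < π / p := by positivity
  have hx : π / p < 2 / 7 := by
    rw [div_lt_iff₀ (by linarith)]
    linarith [pi_lt_d4]
  have hsin_pos : 0 < sin (π / p) := sin_pos_of_pos_of_lt_pi hx0 (by linarith [pi_gt_three])
  have inv_lt {c y : ℝ} (hc : 0 < c) (hy : c * sin (π / p) < y) :
      y⁻¹ < c⁻¹ * (sin (π / p))⁻¹ := by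
    rw [← mul_inv]
    gcongr
  split_ifs with h
  · have hlt := eight_thirds_mul_sin_lt_sin_three_mul hx0 hx
    convert inv_lt (by norm_num) hlt using 2 <;> norm_num [h]
  · have hsin_four := sin_natCast_mul_pi_div_le (show 4 ≤ n by lia) hn
    have hlt := (sixteen_fifths_mul_sin_lt_sin_four_mul hx0 hx).trans_le hsin_four
    convert inv_lt (by norm_num) hlt using 2
    norm_num

lemma sum_inv_sin_natCast_mul_lt (hp : 11 ≤ p) {ι : Type*} {s : Finset ι} (hs : #s ≤ 3)
    {n : ι → ℕ} (hinj : Set.InjOn n s) (hn3 : ∀ j ∈ s, 3 ≤ n j) (hn : ∀ j ∈ s, 2 * n j ≤ p) :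
    ∑ j ∈ s, (sin (n j * (π / p)))⁻¹ < (sin (π / p))⁻¹ := by
  have hsin_pos : 0 < sin (π / p) := by
    have hp' : (1 : ℝ) < p := by exact_mod_cast (by lia : 1 < p)
    exact sin_pos_of_pos_of_lt_pi (by positivity) (div_lt_self pi_pos hp')
  rcases s.eq_empty_or_nonempty with rfl | hne
  · simpa using hsin_pos
  have hthree : #{j ∈ s | n j = 3} ≤ 1 := card_le_one.2 fun a ha b hb => by
    simp only [mem_filter] at ha hb
    exact hinj ha.1 hb.1 (ha.2.trans hb.2.symm)
  have hweight : ∑ j ∈ s, (5 / 16 + if n j = 3 then 1 / 16 else 0 : ℝ) ≤ 1 := by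
    have hs' : (#s : ℝ) ≤ 3 := by exact_mod_cast hs
    have hthree' : (#{j ∈ s | n j = 3} : ℝ) ≤ 1 := by exact_mod_cast hthree
    rw [sum_add_distrib, ← sum_filter, sum_const, sum_const, nsmul_eq_mul, nsmul_eq_mul]
    linarith
  calc ∑ j ∈ s, (sin (n j * (π / p)))⁻¹
      < ∑ j ∈ s, (5 / 16 + if n j = 3 then 1 / 16 else 0) * (sin (π / p))⁻¹ :=
        sum_lt_sum_of_nonempty hne fun j hj => inv_sin_natCast_mul_lt hp (hn3 j hj) (hn j hj)
    _ = (∑ j ∈ s, (5 / 16 + if n j = 3 then 1 / 16 else 0)) * (sin (π / p))⁻¹ :=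
        (sum_mul ..).symm
    _ ≤ (sin (π / p))⁻¹ := mul_le_of_le_one_left (inv_nonneg.2 hsin_pos.le) hweight

end Trigonometry

section Covering

lemma eq_natAbs_valMinAbs_mul_or_eq_neg {p c : ℕ} [NeZero p] (hc : c.Coprime p) (a : ZMod p) :
    a = (a * (c : ZMod p)⁻¹).valMinAbs.natAbs * c ∨
      a = -((a * (c : ZMod p)⁻¹).valMinAbs.natAbs * c) := by
  have hinv : (c : ZMod p) * (c : ZMod p)⁻¹ = 1 := ZMod.coe_mul_inv_eq_one c hc
  rw [ZMod.natCast_natAbs_valMinAbs]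
  split_ifs
  · exact .inl (by linear_combination -a * hinv)
  · exact .inr (by linear_combination -a * hinv)

lemma injective_natAbs_valMinAbs_mul_inv {ι : Type*} {p : ℕ} {q : ι → ℕ}
    (hcop : ∀ i, (q i).Coprime p)
    (hinj : Function.Injective fun i => (q i : ZMod p).valMinAbs.natAbs)
    {k : ZMod p} (hk : IsUnit k) :
    Function.Injective fun i => (k * (q i : ZMod p)⁻¹).valMinAbs.natAbs := by
  intro i j hij
  have hinv (i : ι) : (q i : ZMod p) * (q i : ZMod p)⁻¹ = 1 :=
    ZMod.coe_mul_inv_eq_one (q i) (hcop i)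
  refine hinj (ZMod.natAbs_valMinAbs_eq_natAbs_valMinAbs.2 ?_)
  refine (ZMod.natAbs_valMinAbs_eq_natAbs_valMinAbs.1 hij).imp (fun h => ?_) fun h => ?_
  · refine hk.mul_left_cancel ?_
    linear_combination k * q j * hinv i - k * q i * hinv j - q i * q j * h
  · refine hk.mul_left_cancel ?_
    linear_combination q i * q j * h - k * q j * hinv i - k * q i * hinv j

lemma sum_sum_eq_sum_of_existsUnique_mem {ι α M : Type*} [Fintype ι] [Fintype α]
    [AddCommMonoid M] {B : ι → Finset α} (hB : ∀ a, ∃! i, a ∈ B i) (f : α → M) :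
    ∑ i, ∑ a ∈ B i, f a = ∑ a, f a := by
  choose part hmem hunique using hB
  have hswap : ∑ i, ∑ a ∈ B i, f a = ∑ a, ∑ _i ∈ {part a}, f a := by
    refine sum_comm' fun i a => ?_
    simp only [mem_univ, true_and, and_true, mem_singleton]
    exact ⟨hunique a i, fun h => h ▸ hmem a⟩
  simpa only [sum_singleton] using hswap

variable {ι : Type*} {p : ℕ} [NeZero p] {q : ι → ℕ} {b : ι → ZMod p}

lemma lt_of_existsUnique_mem_beattyResidues [Nontrivial ι] (hpos : ∀ i, 0 < q i)
    (hcop : ∀ i, (q i).Coprime p) (hcov : ∀ m : ZMod p, ∃! i, m ∈ beattyResidues p (q i) (b i))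
    (i : ι) : q i < p := by
  by_contra! hpq
  obtain ⟨j, hji⟩ := exists_ne i
  obtain ⟨m, hm⟩ := beattyResidues_nonempty (hpos j) (b j)
  exact hji ((hcov m).unique hm (mem_beattyResidues_of_le (hcop i) hpq _ m))

variable [Fintype ι]

lemma sum_eq_of_existsUnique_mem_beattyResidues (hle : ∀ i, q i ≤ p)
    (hcop : ∀ i, (q i).Coprime p)
    (hcov : ∀ m : ZMod p, ∃! i, m ∈ beattyResidues p (q i) (b i)) :
    ∑ i, q i = p := by
  calc ∑ i, q i = ∑ i, ∑ _m ∈ beattyResidues p (q i) (b i), 1 := by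
        simp only [← card_eq_sum_ones, card_beattyResidues (hcop _) (hle _)]
    _ = ∑ _m : ZMod p, 1 := sum_sum_eq_sum_of_existsUnique_mem hcov _
    _ = p := by rw [← card_eq_sum_ones, card_univ, ZMod.card]

-- The Fourier coefficients at `k ≠ 0` of the residue sets add up to zero, so none of them exceeds
-- the sum of the others in absolute value.
lemma inv_chord_le_sum_inv_chord [DecidableEq ι] (hle : ∀ i, q i ≤ p)
    (hcop : ∀ i, (q i).Coprime p)
    (hcov : ∀ m : ZMod p, ∃! i, m ∈ beattyResidues p (q i) (b i))
    {k : ZMod p} (hk : k ≠ 0) (i : ι) :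
    (chord (k * (q i : ZMod p)⁻¹))⁻¹
      ≤ ∑ j ∈ univ.erase i, (chord (k * (q j : ZMod p)⁻¹))⁻¹ := by
  set F : ι → ℂ := fun j => ∑ m ∈ beattyResidues p (q j) (b j), ZMod.stdAddChar (k * m)
  have hsum : ∑ j, F j = 0 := by
    have hchar := AddChar.sum_mulShift k (ZMod.isPrimitive_stdAddChar p)
    simp only [mul_comm _ k, if_neg hk, Nat.cast_zero] at hchar
    exact (sum_sum_eq_sum_of_existsUnique_mem hcov _).trans hchar
  have hnorm (j : ι) : ‖F j‖ = chord k * (chord (k * (q j : ZMod p)⁻¹))⁻¹ := by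
    have hne : k * (q j : ZMod p)⁻¹ ≠ 0 := fun h => hk <| by
      linear_combination q j * h - k * ZMod.coe_mul_inv_eq_one (q j) (hcop j)
    rw [← norm_sum_beattyResidues_mul_chord (hcop j) (hle j) (b j) k,
      mul_inv_cancel_right₀ (chord_pos hne).ne']
  refine le_of_mul_le_mul_left ?_ (chord_pos hk)
  calc chord k * (chord (k * (q i : ZMod p)⁻¹))⁻¹ = ‖F i‖ := (hnorm i).symm
    _ = ‖∑ j ∈ univ.erase i, F j‖ := by
      rw [← norm_neg, eq_neg_of_add_eq_zero_left ((add_sum_erase _ F (mem_univ i)).trans hsum),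
        neg_neg]
    _ ≤ ∑ j ∈ univ.erase i, ‖F j‖ := norm_sum_le _ _
    _ = chord k * ∑ j ∈ univ.erase i, (chord (k * (q j : ZMod p)⁻¹))⁻¹ := by
      simp only [hnorm, mul_sum]

lemma inv_sin_le_sum_inv_sin [DecidableEq ι] (hp : 2 ≤ p) (hle : ∀ i, q i ≤ p)
    (hcop : ∀ i, (q i).Coprime p)
    (hcov : ∀ m : ZMod p, ∃! i, m ∈ beattyResidues p (q i) (b i)) (i : ι) :
    (sin (π / p))⁻¹ ≤ ∑ j ∈ univ.erase i,
      (sin (((q i : ZMod p) * (q j : ZMod p)⁻¹).valMinAbs.natAbs * (π / p)))⁻¹ := by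
  have : Fact (1 < p) := ⟨hp⟩
  have hne : (q i : ZMod p) ≠ 0 := ((ZMod.isUnit_iff_coprime _ _).2 (hcop i)).ne_zero
  have hone : (1 : ZMod p).valMinAbs.natAbs = 1 := by
    rw [← Nat.cast_one, ZMod.valMinAbs_natCast_of_le_half (by lia), Int.natAbs_natCast]
  have hchord := inv_chord_le_sum_inv_chord hle hcop hcov hne i
  rw [ZMod.coe_mul_inv_eq_one (q i) (hcop i)] at hchord
  simp only [chord_eq_two_mul_sin, hone, Nat.cast_one, one_mul, mul_inv, ← mul_sum] at hchord
  exact le_of_mul_le_mul_left hchord (by norm_num)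

-- At the frequency `q i`, the coefficients of the other residue sets are too small to balance
-- that of the `i`-th one unless some quotient `q i / q j` is `±2`.
lemma exists_ne_eq_two_mul_or_eq_neg_two_mul (hp : 11 ≤ p) (hcard : Fintype.card ι ≤ 4)
    (hle : ∀ i, q i ≤ p) (hcop : ∀ i, (q i).Coprime p)
    (hinj : Function.Injective fun i => (q i : ZMod p).valMinAbs.natAbs)
    (hcov : ∀ m : ZMod p, ∃! i, m ∈ beattyResidues p (q i) (b i)) (i : ι) :
    ∃ j ≠ i, (q i : ZMod p) = 2 * q j ∨ (q i : ZMod p) = -(2 * q j) := by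
  classical
  have : Fact (1 < p) := ⟨by lia⟩
  by_contra! hno
  set n : ι → ℕ := fun j => ((q i : ZMod p) * (q j : ZMod p)⁻¹).valMinAbs.natAbs
  have hunit : IsUnit (q i : ZMod p) := (ZMod.isUnit_iff_coprime _ _).2 (hcop i)
  have hn_inj : Function.Injective n := injective_natAbs_valMinAbs_mul_inv hcop hinj hunit
  have hq_eq (j : ι) : (q i : ZMod p) = n j * q j ∨ (q i : ZMod p) = -(n j * q j) :=
    eq_natAbs_valMinAbs_mul_or_eq_neg (hcop j) _
  have hn3 (j : ι) (hj : j ≠ i) : 3 ≤ n j := by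
    have hn0 : n j ≠ 0 := fun h => hunit.ne_zero (by simpa [h] using hq_eq j)
    have hn1 : n j ≠ 1 := fun h => hj.symm <| hinj <|
      ZMod.natAbs_valMinAbs_eq_natAbs_valMinAbs.2 (by simpa [h] using hq_eq j)
    have hn2 : n j ≠ 2 := fun h =>
      (show _ ∨ _ by simpa only [h, Nat.cast_ofNat] using hq_eq j).elim (hno j hj).1 (hno j hj).2
    lia
  have hn_le (j : ι) : 2 * n j ≤ p := by
    have := ZMod.natAbs_valMinAbs_le ((q i : ZMod p) * (q j : ZMod p)⁻¹)
    lia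
  have hcard_erase : #(univ.erase i) ≤ 3 := by
    rw [card_erase_of_mem (mem_univ i), card_univ]
    lia
  have htrig : ∑ j ∈ univ.erase i, (sin (n j * (π / p)))⁻¹ < (sin (π / p))⁻¹ :=
    sum_inv_sin_natCast_mul_lt hp hcard_erase hn_inj.injOn
      (fun j hj => hn3 j (ne_of_mem_erase hj)) fun j _ => hn_le j
  exact htrig.not_ge (inv_sin_le_sum_inv_sin (by lia) hle hcop hcov i)

end Covering

section Doubling

variable {p : ℕ}

lemma injective_natAbs_valMinAbs_natCast {ι : Type*} {q : ι → ℕ} (hpos : ∀ i, 0 < q i)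
    (hinj : Function.Injective q) (hadd : ∀ i j, i ≠ j → q i + q j < p) :
    Function.Injective fun i => (q i : ZMod p).valMinAbs.natAbs := by
  intro i j hij
  by_contra hne
  have hlt := hadd i j hne
  rcases ZMod.natAbs_valMinAbs_eq_natAbs_valMinAbs.1 hij with h | h
  · rw [ZMod.natCast_eq_natCast_iff', Nat.mod_eq_of_lt (by lia), Nat.mod_eq_of_lt (by lia)] at h
    exact hne (hinj h)
  · rw [eq_neg_iff_add_eq_zero, ← Nat.cast_add, ZMod.natCast_eq_zero_iff] at h
    have := Nat.le_of_dvd (Nat.add_pos_left (hpos i) _) h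
    lia

lemma eq_of_natCast_eq_two_mul_or_eq_neg {a b : ℕ} (ha0 : 0 < a) (ha : a < p) (hb : b < p)
    (h : (a : ZMod p) = 2 * b ∨ (a : ZMod p) = -(2 * b)) :
    a = 2 * b ∨ a + p = 2 * b ∨ a + 2 * b = p ∨ a + 2 * b = 2 * p := by
  rcases h with h | h
  · have hmod : a = 2 * b % p := by
      rw [← Nat.cast_ofNat, ← Nat.cast_mul, ZMod.natCast_eq_natCast_iff', Nat.mod_eq_of_lt ha] at h
      exact h
    have hdiv : 2 * b / p < 2 := Nat.div_lt_of_lt_mul (by lia)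
    have hdecomp := Nat.div_add_mod (2 * b) p
    interval_cases 2 * b / p <;> lia
  · have hdvd : p ∣ a + 2 * b := by
      rw [← ZMod.natCast_eq_zero_iff]
      push_cast
      rw [h, neg_add_cancel]
    obtain ⟨k, hk⟩ := hdvd
    have hk3 : k < 3 := Nat.lt_of_mul_lt_mul_left (a := p) (by lia)
    interval_cases k <;> lia

lemma eq_two_mul_of_forall_exists_ne {q : Fin 4 → ℕ} (hanti : StrictAnti q) (hpos : ∀ i, 0 < q i)
    (h : ∀ i, ∃ j ≠ i, q i = 2 * q j ∨ q i + ∑ l, q l = 2 * q j ∨ q i + 2 * q j = ∑ l, q l ∨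
      q i + 2 * q j = 2 * ∑ l, q l) :
    q 0 = 2 * q 1 := by
  have h01 : q 1 < q 0 := hanti (by decide)
  have h12 : q 2 < q 1 := hanti (by decide)
  have h23 : q 3 < q 2 := hanti (by decide)
  have h3 : 0 < q 3 := hpos 3
  simp only [Fin.sum_univ_four] at h
  have hsmallest : q 0 = q 1 + q 2 ∨ q 0 = q 1 + q 2 + 2 * q 3 := by
    obtain ⟨j, hj, hdouble⟩ := h 3
    obtain rfl | rfl | rfl : j = 0 ∨ j = 1 ∨ j = 2 := by lia
    all_goals omega
  have hlargest : q 0 = 2 * q 1 ∨ q 1 = q 2 + q 3 := by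
    obtain ⟨j, hj, hdouble⟩ := h 0
    obtain rfl | rfl | rfl : j = 1 ∨ j = 2 ∨ j = 3 := by lia
    all_goals omega
  refine hlargest.resolve_right fun hq1 => ?_
  obtain ⟨j, hj, hdouble⟩ := h 1
  obtain rfl | rfl | rfl : j = 0 ∨ j = 2 ∨ j = 3 := by lia
  all_goals omega

lemma add_lt_sum_of_two_lt_card {ι : Type*} [Fintype ι] {q : ι → ℕ} (hcard : 2 < Fintype.card ι)
    (hpos : ∀ i, 0 < q i) {i j : ι} (hij : i ≠ j) : q i + q j < ∑ l, q l := by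
  classical
  obtain ⟨l, -, hl⟩ := exists_mem_notMem_of_card_lt_card
    (s := {i, j}) (t := univ) (card_le_two.trans_lt hcard)
  rw [← sum_pair hij]
  exact sum_lt_sum_of_subset (subset_univ _) (mem_univ l) hl (hpos l) fun _ _ _ => Nat.zero_le _

lemma eleven_le_sum_of_strictAnti {q : Fin 4 → ℕ} (hanti : StrictAnti q) (hpos : ∀ i, 0 < q i)
    (hcop : (q 2).Coprime (∑ i, q i)) : 11 ≤ ∑ i, q i := by
  have h01 : q 1 < q 0 := hanti (by decide)
  have h12 : q 2 < q 1 := hanti (by decide)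
  have h23 : q 3 < q 2 := hanti (by decide)
  have h3 : 0 < q 3 := hpos 3
  rw [Fin.sum_univ_four] at hcop ⊢
  by_contra! hlt
  have hq2 : q 2 = 2 := by lia
  have hsum : q 0 + q 1 + q 2 + q 3 = 10 := by lia
  rw [hsum, hq2] at hcop
  exact absurd hcop (by decide)

lemma eq_two_mul_of_existsUnique_mem_beattyResidues [NeZero p] {q : Fin 4 → ℕ} {b : Fin 4 → ZMod p}
    (hanti : StrictAnti q) (hpos : ∀ i, 0 < q i) (hcop : ∀ i, (q i).Coprime p)
    (hcov : ∀ m : ZMod p, ∃! i, m ∈ beattyResidues p (q i) (b i)) :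
    q 0 = 2 * q 1 := by
  have hlt : ∀ i, q i < p := lt_of_existsUnique_mem_beattyResidues hpos hcop hcov
  have hle (i : Fin 4) : q i ≤ p := (hlt i).le
  have hsum : ∑ i, q i = p := sum_eq_of_existsUnique_mem_beattyResidues hle hcop hcov
  have hp : 11 ≤ p := hsum ▸ eleven_le_sum_of_strictAnti hanti hpos (hsum.symm ▸ hcop 2)
  have hinj := injective_natAbs_valMinAbs_natCast hpos hanti.injective fun i j hij =>
    (add_lt_sum_of_two_lt_card (by decide) hpos hij).trans_eq hsum
  refine eq_two_mul_of_forall_exists_ne hanti hpos fun i => ?_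
  obtain ⟨j, hji, hdouble⟩ :=
    exists_ne_eq_two_mul_or_eq_neg_two_mul hp (by decide) hle hcop hinj hcov i
  rw [hsum]
  exact ⟨j, hji, eq_of_natCast_eq_two_mul_or_eq_neg (hpos i) (hlt i) (hlt j) hdouble⟩

end Doubling

/-- If the four rational Beatty sequences `S(p/qᵢ, βᵢ)` form a disjoint
covering system of the integers, with `q₁ > q₂ > q₃ > q₄ ≥ 1` and
`gcd(p, qᵢ) = 1`, then `q1 = 2 * q2`. -/
theorem fraenkel_four_q1_eq_two_q2 (p q1 q2 q3 q4 : ℕ) (hp : 0 < p)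
    (h12 : q2 < q1) (h23 : q3 < q2) (h34 : q4 < q3) (h4 : 1 ≤ q4)
    (hg1 : Nat.gcd p q1 = 1) (hg2 : Nat.gcd p q2 = 1)
    (hg3 : Nat.gcd p q3 = 1) (hg4 : Nat.gcd p q4 = 1)
    (β : Fin 4 → ℝ)
    (hcov : ∀ m : ℤ, ∃! i : Fin 4,
      m ∈ beattySet ((p : ℝ) / ((![q1, q2, q3, q4] i : ℕ) : ℝ)) (β i)) :
    q1 = 2 * q2 := by
  have : NeZero p := ⟨hp.ne'⟩
  have hanti : StrictAnti ![q1, q2, q3, q4] := by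
    simp [Fin.strictAnti_iff_succ_lt, Fin.forall_fin_succ, h12, h23, h34]
  have hpos (i : Fin 4) : 0 < ![q1, q2, q3, q4] i := h4.trans (hanti.antitone (Fin.le_last i))
  have hcop (i : Fin 4) : (![q1, q2, q3, q4] i).Coprime p := by
    refine Nat.Coprime.symm ?_
    fin_cases i
    exacts [hg1, hg2, hg3, hg4]
  refine eq_two_mul_of_existsUnique_mem_beattyResidues hanti hpos hcop
    (b := fun i => ⌊![q1, q2, q3, q4] i * β i⌋) fun m => ?_
  obtain ⟨m, rfl⟩ := ZMod.intCast_surjective m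
  simpa only [mem_beattySet_div_iff_intCast_mem_beattyResidues (hpos _) (hcop _)] using hcov m
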